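/- Let (W, r_1, …, r_n) be a Strip Packing instance whose rectangles are listed in the FQW-ordering with Q ≠ ∅, and consider its BL packing. Let k ≥ 1 and ℓ ∈ L^k. Then either LM(ℓ) = LM^k, or the occupied fraction of ℓ is at least 1/2. -/

import Mathlib

open scoped Classical
open MeasureTheory

/-- An axis-parallel rectangle, given by its width and its height. -/
structure Rect where
  w : ℝ
  h : ℝ

/-- A Strip Packing instance: a strip of width `W > 0` and `n` rectangles
`r 0, …, r (n-1)`, each with positive height and width at most `W`. -/
structure SPInstance (n : ℕ) where
  W : ℝ
  r : Fin n → Rect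
  W_pos : 0 < W
  w_pos : ∀ i, 0 < (r i).w
  w_le_W : ∀ i, (r i).w ≤ W
  h_pos : ∀ i, 0 < (r i).h

/-- The open box of rectangle `R` placed at position `p`. -/
def openBox (R : Rect) (p : ℝ × ℝ) : Set (ℝ × ℝ) :=
  Set.Ioo p.1 (p.1 + R.w) ×ˢ Set.Ioo p.2 (p.2 + R.h)

/-- The closed box of rectangle `R` placed at position `p`. -/
def closedBox (R : Rect) (p : ℝ × ℝ) : Set (ℝ × ℝ) :=
  Set.Icc p.1 (p.1 + R.w) ×ˢ Set.Icc p.2 (p.2 + R.h)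

namespace SPInstance

variable {n : ℕ}

/-- Rectangle `i` placed at `p` lies inside the strip. -/
def InStrip (I : SPInstance n) (i : Fin n) (p : ℝ × ℝ) : Prop :=
  0 ≤ p.1 ∧ p.1 + (I.r i).w ≤ I.W ∧ 0 ≤ p.2

/-- `pos` is a feasible packing: each rectangle lies in the strip and the open
boxes are pairwise disjoint. -/
def Feasible (I : SPInstance n) (pos : Fin n → ℝ × ℝ) : Prop :=
  (∀ i, I.InStrip i (pos i)) ∧
    Pairwise (fun i j : Fin n =>
      Disjoint (openBox (I.r i) (pos i)) (openBox (I.r j) (pos j)))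

/-- The height of a packing, `max_i (y_i + h_i)`. -/
noncomputable def height (I : SPInstance n) (pos : Fin n → ℝ × ℝ) : ℝ :=
  ⨆ i, ((pos i).2 + (I.r i).h)

/-- The minimum height of a feasible packing. -/
noncomputable def hOPT (I : SPInstance n) : ℝ :=
  sInf {H | ∃ pos, I.Feasible pos ∧ I.height pos = H}

/-- The maximum height of a rectangle of the instance. -/
noncomputable def hmax (I : SPInstance n) : ℝ :=
  ⨆ i, (I.r i).h

/-- Rectangle `i` can feasibly be placed at `p`, given the rectangles
`j < i` already placed at `pos j`. -/
def FeasibleAt (I : SPInstance n) (pos : Fin n → ℝ × ℝ) (i : Fin n) (p : ℝ × ℝ) : Prop :=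
  I.InStrip i p ∧ ∀ j : Fin n, j < i →
    Disjoint (openBox (I.r i) p) (openBox (I.r j) (pos j))

/-- `pos` is the Bottom-Left packing for the ordering `r 0, r 1, …`: every
rectangle is feasibly placed, at the lexicographically minimal `(y, x)`. -/
def IsBL (I : SPInstance n) (pos : Fin n → ℝ × ℝ) : Prop :=
  ∀ i : Fin n, I.FeasibleAt pos i (pos i) ∧
    ∀ p : ℝ × ℝ, I.FeasibleAt pos i p →
      (pos i).2 < p.2 ∨ ((pos i).2 = p.2 ∧ (pos i).1 ≤ p.1)

/-- Greedy construction of the set `F` of the FQW-partition, processing the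
rectangles in the order `σ 0, σ 1, …` and adding a rectangle whenever the
total width of `F` stays at most `W`. -/
noncomputable def greedyF (I : SPInstance n) (σ : Equiv.Perm (Fin n)) : Finset (Fin n) :=
  (List.finRange n).foldl
    (fun F k =>
      if (I.r (σ k)).w + ∑ f ∈ F, (I.r f).w ≤ I.W then insert (σ k) F else F) ∅

end SPInstance

/-- An FQW-partition datum: a processing order `σ` of the rectangles that is
sorted by decreasing height. -/
structure FQW {n : ℕ} (I : SPInstance n) where
  σ : Equiv.Perm (Fin n)
  sorted : ∀ k k' : Fin n, k ≤ k' → (I.r (σ k')).h ≤ (I.r (σ k)).h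

namespace FQW

variable {n : ℕ} {I : SPInstance n}

/-- The set `F` of the FQW-partition. -/
noncomputable def F (d : FQW I) : Finset (Fin n) := I.greedyF d.σ

/-- The set `𝒲` of the FQW-partition: rectangles not in `F` of width
greater than `W/2`. -/
noncomputable def Wset (d : FQW I) : Finset (Fin n) :=
  Finset.univ.filter fun i => i ∉ d.F ∧ I.W / 2 < (I.r i).w

/-- The set `Q` of the FQW-partition: all remaining rectangles. -/
noncomputable def Q (d : FQW I) : Finset (Fin n) :=
  Finset.univ.filter fun i => i ∉ d.F ∧ ¬ I.W / 2 < (I.r i).w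

/-- The rectangles of the instance are listed in the FQW-ordering: first `F`
sorted by decreasing height, then `Q` sorted by decreasing width, then `𝒲`. -/
def IsOrdered (d : FQW I) : Prop :=
  (∀ i : Fin n, i ∈ d.F ↔ (i : ℕ) < d.F.card) ∧
  (∀ i : Fin n, i ∈ d.Q ↔ d.F.card ≤ (i : ℕ) ∧ (i : ℕ) < d.F.card + d.Q.card) ∧
  (∀ i j : Fin n, (i : ℕ) ≤ (j : ℕ) → (j : ℕ) < d.F.card → (I.r j).h ≤ (I.r i).h) ∧
  (∀ i j : Fin n, d.F.card ≤ (i : ℕ) → (i : ℕ) ≤ (j : ℕ) →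
    (j : ℕ) < d.F.card + d.Q.card → (I.r j).w ≤ (I.r i).w)

end FQW

/-- `max {y_{r_1}, …, y_{r_i}}` (the first `i` rectangles, `0` if `i = 0`):
the lower boundary of the region `H_{i+1}` of the horizontal strip partition. -/
noncomputable def maxYBelow {n : ℕ} (pos : Fin n → ℝ × ℝ) (i : ℕ) : ℝ :=
  ⨆ j : {j : Fin n // (j : ℕ) < i}, (pos (j : Fin n)).2

namespace SPInstance

variable {n : ℕ}

/-- The horizontal line at height `t` is proper: it meets no top or
bottom face of a rectangle. -/
def ProperLine (I : SPInstance n) (pos : Fin n → ℝ × ℝ) (t : ℝ) : Prop :=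
  ∀ j : Fin n, t ≠ (pos j).2 ∧ t ≠ (pos j).2 + (I.r j).h

/-- Rectangle `j` intersects the horizontal line at height `t`. -/
def Intersects (I : SPInstance n) (pos : Fin n → ℝ × ℝ) (j : Fin n) (t : ℝ) : Prop :=
  (pos j).2 < t ∧ t < (pos j).2 + (I.r j).h

/-- The occupied part of the horizontal line at height `t`. -/
noncomputable def occupied (I : SPInstance n) (pos : Fin n → ℝ × ℝ) (t : ℝ) : Set ℝ :=
  ⋃ j ∈ {j : Fin n | I.Intersects pos j t}, Set.Icc (pos j).1 ((pos j).1 + (I.r j).w)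

/-- The occupied fraction of the horizontal line at height `t`. -/
noncomputable def occFrac (I : SPInstance n) (pos : Fin n → ℝ × ℝ) (t : ℝ) : ℝ :=
  (volume (I.occupied pos t)).toReal / I.W

/-- The region `H_{i+1}` (for the `0`-based index `i`) of the horizontal strip
partition: `[0, W] × [max {y_{r_1}, …, y_{r_i}}, y_{r_{i+1}})`. -/
def regionH (I : SPInstance n) (pos : Fin n → ℝ × ℝ) (i : Fin n) : Set (ℝ × ℝ) :=
  Set.Icc 0 I.W ×ˢ Set.Ico (maxYBelow pos (i : ℕ)) (pos i).2

/-- `G` is an unoccupied gap of the horizontal line at height `t`: a maximal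
subinterval of `[0, W]` disjoint from the occupied part of the line. -/
def IsGap (I : SPInstance n) (pos : Fin n → ℝ × ℝ) (t : ℝ) (G : Set ℝ) : Prop :=
  G.Nonempty ∧ G ⊆ Set.Icc 0 I.W ∧ G.OrdConnected ∧ Disjoint G (I.occupied pos t) ∧
    ∀ G' : Set ℝ, G'.OrdConnected → G' ⊆ Set.Icc 0 I.W →
      Disjoint G' (I.occupied pos t) → G ⊆ G' → G' = G

/-- `j` is a left supporter of `i`: it comes before `i` in the ordering, its
right face touches the left face of `i`, and their open `y`-ranges intersect. -/
def IsLeftSupporter (I : SPInstance n) (pos : Fin n → ℝ × ℝ) (i j : Fin n) : Prop :=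
  j < i ∧ (pos j).1 + (I.r j).w = (pos i).1 ∧
    (pos j).2 < (pos i).2 + (I.r i).h ∧ (pos i).2 < (pos j).2 + (I.r j).h

/-- `j` is a bottom supporter of `i`: it comes before `i` in the ordering, its
top face touches the bottom face of `i`, and their open `x`-ranges intersect. -/
def IsBottomSupporter (I : SPInstance n) (pos : Fin n → ℝ × ℝ) (i j : Fin n) : Prop :=
  j < i ∧ (pos j).2 + (I.r j).h = (pos i).2 ∧
    (pos j).1 < (pos i).1 + (I.r i).w ∧ (pos i).1 < (pos j).1 + (I.r j).w

/-- `j` is the leftmost bottom supporter of `i`. -/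
def IsLeftmostBottomSupporter (I : SPInstance n) (pos : Fin n → ℝ × ℝ)
    (i j : Fin n) : Prop :=
  I.IsBottomSupporter pos i j ∧
    ∀ j' : Fin n, I.IsBottomSupporter pos i j' → (pos j).1 ≤ (pos j').1

end SPInstance

/-- `iT` is the top rectangle `r_T` of `Q`: the rectangle of `Q` whose top face
is highest, ties broken by highest bottom face. -/
def IsTopRect {n : ℕ} (I : SPInstance n) (d : FQW I) (pos : Fin n → ℝ × ℝ)
    (iT : Fin n) : Prop :=
  iT ∈ d.Q ∧ ∀ j ∈ d.Q,
    (pos j).2 + (I.r j).h < (pos iT).2 + (I.r iT).h ∨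
    ((pos j).2 + (I.r j).h = (pos iT).2 + (I.r iT).h ∧ (pos j).2 ≤ (pos iT).2)

/-- `iL` is the left rectangle `r_L` of `Q`: the first rectangle of `Q` in the
ordering touching the left strip boundary, and `r_T` if there is none. -/
def IsLeftRect {n : ℕ} (I : SPInstance n) (d : FQW I) (pos : Fin n → ℝ × ℝ)
    (iT iL : Fin n) : Prop :=
  (iL ∈ d.Q ∧ (pos iL).1 = 0 ∧ ∀ j ∈ d.Q, (pos j).1 = 0 → iL ≤ j) ∨
  ((∀ j ∈ d.Q, (pos j).1 ≠ 0) ∧ iL = iT)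

/-- The region `H' = [0, W] × ([0, h_{r_T}] ∪ [y_{r_T}, y_{r_T} + h_{r_T}])`. -/
def Hprime {n : ℕ} (I : SPInstance n) (pos : Fin n → ℝ × ℝ) (iT : Fin n) :
    Set (ℝ × ℝ) :=
  Set.Icc 0 I.W ×ˢ
    (Set.Icc 0 (I.r iT).h ∪ Set.Icc (pos iT).2 ((pos iT).2 + (I.r iT).h))

/-- The type `T(ℓ)` of the proper horizontal line at height `t`: the rectangles
of `Q` intersecting the line whose index is smaller than the least index `j`
with `y_{r_j} > t` (equivalently, all rectangles with index at most theirs have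
bottom face at height at most `t`). -/
noncomputable def TypeOf {n : ℕ} (I : SPInstance n) (d : FQW I)
    (pos : Fin n → ℝ × ℝ) (t : ℝ) : Finset (Fin n) :=
  Finset.univ.filter fun i =>
    i ∈ d.Q ∧ I.Intersects pos i t ∧ ∀ j : Fin n, j ≤ i → (pos j).2 ≤ t

/-- `i` is `LM(ℓ)`: the rectangle of `T(ℓ)` with smallest `x`-coordinate. -/
def IsLM {n : ℕ} (I : SPInstance n) (d : FQW I) (pos : Fin n → ℝ × ℝ) (t : ℝ)
    (i : Fin n) : Prop :=
  i ∈ TypeOf I d pos t ∧ ∀ j ∈ TypeOf I d pos t, (pos i).1 ≤ (pos j).1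

/-- The horizontal line at height `t` lies in `H_{a+2} ∪ ⋯ ∪ H_L`, where `iL`
is the `0`-based index of `r_L` (so `L = iL + 1`, `1`-based). -/
def LineInHUnion {n : ℕ} (I : SPInstance n) (d : FQW I) (pos : Fin n → ℝ × ℝ)
    (iL : Fin n) (t : ℝ) : Prop :=
  ∃ m : Fin n, d.F.card + 1 ≤ (m : ℕ) ∧ m ≤ iL ∧
    maxYBelow pos (m : ℕ) ≤ t ∧ t < (pos m).2

/-- The space `H_{a+2} ∪ ⋯ ∪ H_L`, where `iL` is the `0`-based index of `r_L`. -/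
def regionHUnion {n : ℕ} (I : SPInstance n) (d : FQW I) (pos : Fin n → ℝ × ℝ)
    (iL : Fin n) : Set (ℝ × ℝ) :=
  ⋃ m ∈ {m : Fin n | d.F.card + 1 ≤ (m : ℕ) ∧ m ≤ iL}, I.regionH pos m

/-- The horizontal line at height `t` belongs to `L^k`: it is a proper line of
order `k` lying in `H_{a+2} ∪ ⋯ ∪ H_L`. -/
def InLk {n : ℕ} (I : SPInstance n) (d : FQW I) (pos : Fin n → ℝ × ℝ)
    (iL : Fin n) (k : ℕ) (t : ℝ) : Prop :=
  I.ProperLine pos t ∧ LineInHUnion I d pos iL t ∧ (TypeOf I d pos t).card = k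

/-- `i` belongs to `R^k`: it is `LM(ℓ)` for some line `ℓ ∈ L^k`. -/
def InRk {n : ℕ} (I : SPInstance n) (d : FQW I) (pos : Fin n → ℝ × ℝ)
    (iL : Fin n) (k : ℕ) (i : Fin n) : Prop :=
  ∃ t : ℝ, InLk I d pos iL k t ∧ IsLM I d pos t i

/-- `i` is `LM^k`: the rectangle of `R^k` with smallest `x`-coordinate,
ties broken by largest `y`-coordinate. -/
def IsLMk {n : ℕ} (I : SPInstance n) (d : FQW I) (pos : Fin n → ℝ × ℝ)
    (iL : Fin n) (k : ℕ) (i : Fin n) : Prop :=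
  InRk I d pos iL k i ∧ ∀ j : Fin n, InRk I d pos iL k j →
    (pos i).1 < (pos j).1 ∨ ((pos i).1 = (pos j).1 ∧ (pos j).2 ≤ (pos i).2)

/-- `v = x_F^ℓ` for the line `ℓ` at height `t`: the right face `x + w` of the
rightmost rectangle of `F` intersecting `ℓ`, and `0` if there is none. -/
def IsXF {n : ℕ} (I : SPInstance n) (d : FQW I) (pos : Fin n → ℝ × ℝ)
    (t v : ℝ) : Prop :=
  ((∃ f ∈ d.F, I.Intersects pos f t ∧ v = (pos f).1 + (I.r f).w) ∧
    ∀ f ∈ d.F, I.Intersects pos f t → (pos f).1 + (I.r f).w ≤ v) ∨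
  ((∀ f ∈ d.F, ¬ I.Intersects pos f t) ∧ v = 0)

/-!
Let `x_F(t)` be the total width of the rectangles of `F` taller than `t`; they stand side by side on
the bottom, so they fill `[0, x_F(t)]` at height `t > 0`. Fix a line `ℓ` at height `t`, let `r_m` be
the first rectangle placed above it, and put `q = LM(ℓ)`. Since `r_m` was not placed at height `t`,
every window of width `w_m` to the right of `x_F(t)` meets a rectangle of `T(ℓ)`. Hence
`x_q < x_F(t) + w_m`, and, as the rectangles of `T(ℓ)` are at least as wide as `r_m`, the line
satisfies `W ≤ x_q + 2 ∑ T(ℓ)`, where `∑` denotes the total width. Moreover the left supporter of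
`q` lies in `F`, which gives `x_q ≤ x_F(y_q)`.

Suppose `p = LM^k`, the leftmost rectangle of a line `ℓ'` at height `t'`, differs from `q`.
If `p` preceded `r_m`, then `q` would sit above `p`, so `x_q ≤ x_F(y_q) ≤ x_p`, against the choice
of `LM^k`. So `p` does not precede `r_m`. Then `t < t'`, and `T(ℓ')` arises from `T(ℓ)`, a set of
the same size, by exchanging rectangles for ones that are not wider. The bound
`W ≤ x_p + 2 ∑ T(ℓ')` therefore yields `W ≤ x_F(t) + 2 ∑ T(ℓ)`, while `ℓ` is occupied on a length
of at least `x_F(t) + ∑ T(ℓ)`.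
-/

theorem sum_le_of_isLowerSet {ι M : Type*} [LinearOrder ι] [LocallyFiniteOrderBot ι]
    [AddCommMonoid M] [Preorder M] {f : ι → M} {u : M} {s : Finset ι}
    (hs : IsLowerSet (s : Set ι)) (hu : 0 ≤ u)
    (hstep : ∀ j ∈ s, ∑ i ∈ Finset.Iio j, f i ≤ u → ∑ i ∈ Finset.Iic j, f i ≤ u) :
    ∑ i ∈ s, f i ≤ u := by
  induction s using Finset.induction_on_max with
  | empty => simpa using hu
  | insert a s ha ih =>
    have hs_eq : s = Finset.Iio a := by
      ext i
      refine ⟨fun hi => Finset.mem_Iio.2 (ha i hi), fun hi => ?_⟩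
      have hia := Finset.mem_Iio.1 hi
      exact Finset.mem_of_mem_insert_of_ne (hs hia.le (Finset.mem_insert_self a s)) hia.ne
    subst hs_eq
    rw [Finset.Iio_insert] at hstep ⊢
    refine hstep a (Finset.mem_Iic.2 le_rfl) (ih ?_ fun j hj => hstep j ?_)
    · simpa using isLowerSet_Iio a
    · exact Finset.mem_Iic.2 (Finset.mem_Iio.1 hj).le

theorem add_sum_le_sum_add_of_card_eq {ι M : Type*} [AddCommGroup M] [PartialOrder M]
    [IsOrderedAddMonoid M] {s t : Finset ι} (hcard : s.card = t.card) {f : ι → M} {c : M}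
    (hs : ∀ i ∈ s, i ∉ t → c ≤ f i) (ht : ∀ i ∈ t, i ∉ s → f i ≤ c) {p : ι} (hpt : p ∈ t)
    (hps : p ∉ s) :
    c + ∑ i ∈ t, f i ≤ ∑ i ∈ s, f i + f p := by
  have hgain : c - f p ≤ ∑ i ∈ t \ s, (c - f i) :=
    Finset.single_le_sum (f := fun i => c - f i)
      (fun i hi => sub_nonneg.2 <| ht i (Finset.mem_sdiff.1 hi).1 (Finset.mem_sdiff.1 hi).2)
      (Finset.mem_sdiff.2 ⟨hpt, hps⟩)
  have hloss : ∑ i ∈ s \ t, (c - f i) ≤ 0 :=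
    Finset.sum_nonpos fun i hi =>
      sub_nonpos.2 <| hs i (Finset.mem_sdiff.1 hi).1 (Finset.mem_sdiff.1 hi).2
  refine sub_le_sub_iff.1 ?_
  calc c - f p ≤ ∑ i ∈ t \ s, (c - f i) - ∑ i ∈ s \ t, (c - f i) :=
        hgain.trans (le_sub_self_iff _ |>.2 hloss)
    _ = ∑ i ∈ t, (c - f i) - ∑ i ∈ s, (c - f i) := Finset.sum_sdiff_sub_sum_sdiff
    _ = ∑ i ∈ s, f i - ∑ i ∈ t, f i := by
        rw [Finset.sum_sub_distrib, Finset.sum_sub_distrib, Finset.sum_const, Finset.sum_const,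
          hcard, sub_sub_sub_cancel_left]

theorem sub_le_sum_of_Ioc_subset_biUnion_Ioo {ι : Type*} {s : Finset ι} {a b : ℝ} {l r : ι → ℝ}
    (hlr : ∀ i ∈ s, l i ≤ r i) (hsub : Set.Ioc a b ⊆ ⋃ i ∈ s, Set.Ioo (l i) (r i)) :
    b - a ≤ ∑ i ∈ s, (r i - l i) := by
  have hvol : volume (Set.Ioc a b) ≤ ∑ i ∈ s, volume (Set.Ioo (l i) (r i)) :=
    (measure_mono hsub).trans (measure_biUnion_finset_le _ _)
  simp only [Real.volume_Ioc, Real.volume_Ioo] at hvol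
  have hnonneg : ∀ i ∈ s, 0 ≤ r i - l i := fun i hi => sub_nonneg.2 (hlr i hi)
  rwa [← ENNReal.ofReal_sum_of_nonneg hnonneg,
    ENNReal.ofReal_le_ofReal_iff (Finset.sum_nonneg hnonneg)] at hvol

theorem disjoint_openBox_iff {R R' : Rect} (hw : 0 < R.w) (hh : 0 < R.h) (hw' : 0 < R'.w)
    (hh' : 0 < R'.h) (p p' : ℝ × ℝ) :
    Disjoint (openBox R p) (openBox R' p') ↔
      p.1 + R.w ≤ p'.1 ∨ p'.1 + R'.w ≤ p.1 ∨ p.2 + R.h ≤ p'.2 ∨ p'.2 + R'.h ≤ p.2 := by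
  simp only [openBox, Set.disjoint_prod, Set.Ioo_disjoint_Ioo, min_le_iff, le_max_iff]
  grind

namespace SPInstance

variable {n : ℕ} {I : SPInstance n} {pos : Fin n → ℝ × ℝ}

theorem Feasible.separated (hpos : I.Feasible pos) {i j : Fin n} (hij : i ≠ j) :
    (pos i).1 + (I.r i).w ≤ (pos j).1 ∨ (pos j).1 + (I.r j).w ≤ (pos i).1 ∨
      (pos i).2 + (I.r i).h ≤ (pos j).2 ∨ (pos j).2 + (I.r j).h ≤ (pos i).2 :=
  (disjoint_openBox_iff (I.w_pos i) (I.h_pos i) (I.w_pos j) (I.h_pos j) _ _).1 (hpos.2 hij)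

theorem feasibleAt_iff {i : Fin n} {p : ℝ × ℝ} :
    I.FeasibleAt pos i p ↔ I.InStrip i p ∧ ∀ j < i,
      p.1 + (I.r i).w ≤ (pos j).1 ∨ (pos j).1 + (I.r j).w ≤ p.1 ∨
        p.2 + (I.r i).h ≤ (pos j).2 ∨ (pos j).2 + (I.r j).h ≤ p.2 :=
  and_congr_right fun _ => forall₂_congr fun j _ =>
    disjoint_openBox_iff (I.w_pos i) (I.h_pos i) (I.w_pos j) (I.h_pos j) _ _

theorem IsBL.feasible (hBL : I.IsBL pos) : I.Feasible pos := by
  refine ⟨fun i => (hBL i).1.1, fun i j hij => ?_⟩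
  rcases hij.lt_or_gt with h | h
  · exact ((hBL j).1.2 i h).symm
  · exact (hBL i).1.2 j h

theorem Feasible.sum_le_volume_occupied (hpos : I.Feasible pos) {t : ℝ} {s : Finset (Fin n)}
    (hs : ∀ i ∈ s, I.Intersects pos i t) :
    ∑ i ∈ s, (I.r i).w ≤ (volume (I.occupied pos t)).toReal := by
  have hdisj : Set.PairwiseDisjoint (s : Set (Fin n))
      fun i => Set.Ioo (pos i).1 ((pos i).1 + (I.r i).w) := by
    intro i hi j hj hij
    have hit := hs i hi
    have hjt := hs j hj
    rw [Function.onFun, Set.disjoint_left]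
    rintro x ⟨hix, hxi⟩ ⟨hjx, hxj⟩
    rcases hpos.separated hij with h | h | h | h <;> linarith [hit.1, hit.2, hjt.1, hjt.2]
  have hsub : ⋃ i ∈ s, Set.Ioo (pos i).1 ((pos i).1 + (I.r i).w) ⊆ I.occupied pos t :=
    Set.iUnion₂_mono' fun i hi => ⟨i, hs i hi, Set.Ioo_subset_Icc_self⟩
  have hbdd : I.occupied pos t ⊆ Set.Icc 0 I.W :=
    Set.iUnion₂_subset fun i _ => Set.Icc_subset_Icc (hpos.1 i).1 (hpos.1 i).2.1
  have hfin : volume (I.occupied pos t) ≠ ⊤ :=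
    ne_top_of_le_ne_top measure_Icc_lt_top.ne (measure_mono hbdd)
  calc ∑ i ∈ s, (I.r i).w
      = ∑ i ∈ s, volume.real (Set.Ioo (pos i).1 ((pos i).1 + (I.r i).w)) := by
        refine Finset.sum_congr rfl fun i _ => ?_
        rw [Real.volume_real_Ioo_of_le (by linarith [I.w_pos i]), add_sub_cancel_left]
    _ = volume.real (⋃ i ∈ s, Set.Ioo (pos i).1 ((pos i).1 + (I.r i).w)) :=
        (measureReal_biUnion_finset hdisj (fun _ _ => measurableSet_Ioo)
          fun _ _ => measure_Ioo_lt_top.ne).symm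
    _ ≤ volume.real (I.occupied pos t) := measureReal_mono hsub hfin

theorem Feasible.sum_le_fst (hpos : I.Feasible pos) {s : Finset (Fin n)}
    (hs : IsLowerSet (s : Set (Fin n)))
    (hrow : ∀ i ∈ s, pos i = (∑ j ∈ Finset.Iio i, (I.r j).w, 0)) {q : Fin n} (hqs : q ∉ s)
    (hqh : ∀ i ∈ s, (pos q).2 < (I.r i).h) :
    ∑ i ∈ s, (I.r i).w ≤ (pos q).1 := by
  refine sum_le_of_isLowerSet hs (hpos.1 q).1 fun i hi hle => ?_
  have hsep := hpos.separated (ne_of_mem_of_not_mem hi hqs)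
  rw [hrow i hi] at hsep
  rcases hsep with h | h | h | h
  · exact (Finset.sum_Iio_add_eq_sum_Iic i).symm.trans_le h
  · linarith [I.w_pos q]
  · linarith [hqh i hi]
  · linarith [(hpos.1 q).2.2, I.h_pos q]

theorem IsBL.pos_eq_of_sum_Iic_le (hBL : I.IsBL pos) {i : Fin n}
    (hi : ∑ j ∈ Finset.Iic i, (I.r j).w ≤ I.W) :
    pos i = (∑ j ∈ Finset.Iio i, (I.r j).w, 0) := by
  induction i using WellFoundedLT.induction with
  | ind i ih =>
  have hmono : ∀ {s t : Finset (Fin n)}, s ⊆ t → ∑ j ∈ s, (I.r j).w ≤ ∑ j ∈ t, (I.r j).w :=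
    fun hst => Finset.sum_le_sum_of_subset_of_nonneg hst fun j _ _ => (I.w_pos j).le
  have hrow : ∀ j < i, pos j = (∑ k ∈ Finset.Iio j, (I.r k).w, 0) := fun j hj =>
    ih j hj ((hmono (Finset.Iic_subset_Iic.2 hj.le)).trans hi)
  have hfeas : I.FeasibleAt pos i (∑ j ∈ Finset.Iio i, (I.r j).w, 0) := by
    refine feasibleAt_iff.2 ⟨⟨Finset.sum_nonneg fun j _ => (I.w_pos j).le, ?_, le_rfl⟩,
      fun j hj => Or.inr (Or.inl ?_)⟩
    · exact (Finset.sum_Iio_add_eq_sum_Iic i).trans_le hi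
    · rw [hrow j hj, Finset.sum_Iio_add_eq_sum_Iic]
      exact hmono fun k hk => Finset.mem_Iio.2 ((Finset.mem_Iic.1 hk).trans_lt hj)
  obtain ⟨hy, hx⟩ := ((hBL i).2 _ hfeas).resolve_left (hBL.feasible.1 i).2.2.not_gt
  refine Prod.ext (hx.antisymm ?_) hy
  exact hBL.feasible.sum_le_fst (by simpa using isLowerSet_Iio i)
    (fun j hj => hrow j (Finset.mem_Iio.1 hj)) Finset.notMem_Iio_self fun j _ =>
      hy.trans_lt (I.h_pos j)

theorem IsBL.exists_isLeftSupporter (hBL : I.IsBL pos) {i : Fin n} (hi : (pos i).1 ≠ 0) :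
    ∃ j, I.IsLeftSupporter pos i j := by
  -- Without a left supporter the rectangle could be moved slightly to the left.
  by_contra! hnone
  obtain ⟨hx, hxw, hy⟩ := hBL.feasible.1 i
  have hsep : ∀ j < i, ∀ᶠ x in nhdsWithin (pos i).1 (Set.Iio (pos i).1),
      x + (I.r i).w ≤ (pos j).1 ∨ (pos j).1 + (I.r j).w ≤ x ∨
        (pos i).2 + (I.r i).h ≤ (pos j).2 ∨ (pos j).2 + (I.r j).h ≤ (pos i).2 := by
    intro j hj
    rcases hBL.feasible.separated hj.ne' with h | h | h | h
    · filter_upwards [self_mem_nhdsWithin] with x hxi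
      exact Or.inl (by linarith [Set.mem_Iio.1 hxi])
    · rcases h.lt_or_eq with hlt | heq
      · filter_upwards [Ioo_mem_nhdsLT hlt] with x hjx
        exact Or.inr (Or.inl hjx.1.le)
      · have hvert : (pos i).2 + (I.r i).h ≤ (pos j).2 ∨ (pos j).2 + (I.r j).h ≤ (pos i).2 := by
          by_contra! hoverlap
          exact hnone j ⟨hj, heq, hoverlap⟩
        exact .of_forall fun _ => Or.inr (Or.inr hvert)
    · exact .of_forall fun _ => Or.inr (Or.inr (Or.inl h))
    · exact .of_forall fun _ => Or.inr (Or.inr (Or.inr h))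
  obtain ⟨x, hsepx, h0x, hxi⟩ := ((Filter.eventually_all.2 fun j =>
    Filter.eventually_imp_distrib_left.2 (hsep j)).and (Ioo_mem_nhdsLT (hx.lt_of_ne' hi))).exists
  have hfeas : I.FeasibleAt pos i (x, (pos i).2) :=
    feasibleAt_iff.2 ⟨⟨h0x.le, by linarith, hy⟩, hsepx⟩
  rcases (hBL i).2 _ hfeas with h | h
  · exact lt_irrefl _ h
  · exact h.2.not_gt hxi

theorem sum_greedyF_le (I : SPInstance n) (σ : Equiv.Perm (Fin n)) :
    ∑ i ∈ I.greedyF σ, (I.r i).w ≤ I.W := by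
  refine List.foldlRecOn (motive := fun F : Finset (Fin n) => ∑ i ∈ F, (I.r i).w ≤ I.W) _ _
    (by simpa using I.W_pos.le) fun F hF k _ => ?_
  split_ifs with hk
  · by_cases hmem : σ k ∈ F
    · rwa [Finset.insert_eq_of_mem hmem]
    · rwa [Finset.sum_insert hmem]
  · exact hF

end SPInstance

namespace FQW

variable {n : ℕ} {I : SPInstance n} {d : FQW I}

theorem notMem_F_of_mem_Q {i : Fin n} (hi : i ∈ d.Q) : i ∉ d.F :=
  (Finset.mem_filter.1 hi).2.1

theorem IsOrdered.isLowerSet_F (hord : d.IsOrdered) : IsLowerSet (d.F : Set (Fin n)) :=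
  fun i j hji hi => (hord.1 j).2 ((Fin.le_def.1 hji).trans_lt ((hord.1 i).1 hi))

theorem IsOrdered.mem_F_or_mem_Q_of_lt (hord : d.IsOrdered) {i j : Fin n} (hi : i ∈ d.Q)
    (hji : j < i) : j ∈ d.F ∨ j ∈ d.Q := by
  have hi' := (hord.2.1 i).1 hi
  rw [hord.1, hord.2.1]
  lia

theorem IsOrdered.w_le_of_le (hord : d.IsOrdered) {i j : Fin n} (hi : i ∈ d.Q) (hj : j ∈ d.Q)
    (hij : i ≤ j) : (I.r j).w ≤ (I.r i).w :=
  hord.2.2.2 i j ((hord.2.1 i).1 hi).1 hij ((hord.2.1 j).1 hj).2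

/-- The rectangles of `F` taller than `t`. As `F` stands on the bottom of the strip, for `t > 0`
these are the rectangles of `F` intersecting the line at height `t`. -/
noncomputable def tall (d : FQW I) (t : ℝ) : Finset (Fin n) :=
  d.F.filter fun i => t < (I.r i).h

/-- The number `x_F(t)` for the line at height `t > 0`, encoded as a total width, because the
rectangles of `d.tall t` are packed side by side from the left. -/
noncomputable def xF (d : FQW I) (t : ℝ) : ℝ :=
  ∑ i ∈ d.tall t, (I.r i).w

theorem IsOrdered.isLowerSet_tall (hord : d.IsOrdered) (t : ℝ) :
    IsLowerSet (d.tall t : Set (Fin n)) := by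
  intro i j hji hi
  obtain ⟨hiF, hit⟩ := Finset.mem_filter.1 hi
  exact Finset.mem_filter.2 ⟨hord.isLowerSet_F hji hiF,
    hit.trans_le (hord.2.2.1 j i hji ((hord.1 i).1 hiF))⟩

theorem xF_nonneg (d : FQW I) (t : ℝ) : 0 ≤ d.xF t :=
  Finset.sum_nonneg fun i _ => (I.w_pos i).le

theorem xF_antitone (d : FQW I) : Antitone d.xF := fun _ _ hst =>
  Finset.sum_le_sum_of_subset_of_nonneg
    (Finset.monotone_filter_right _ fun _ _ hi => hst.trans_lt hi) fun i _ _ => (I.w_pos i).le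

end FQW

section Line

variable {n : ℕ} {I : SPInstance n} {d : FQW I} {pos : Fin n → ℝ × ℝ}

namespace SPInstance.IsBL

theorem pos_eq_of_mem_F (hBL : I.IsBL pos) (hord : d.IsOrdered) {i : Fin n} (hi : i ∈ d.F) :
    pos i = (∑ j ∈ Finset.Iio i, (I.r j).w, 0) := by
  refine hBL.pos_eq_of_sum_Iic_le (le_trans ?_ (I.sum_greedyF_le d.σ))
  exact Finset.sum_le_sum_of_subset_of_nonneg
    (fun j hj => hord.isLowerSet_F (Finset.mem_Iic.1 hj) hi) fun j _ _ => (I.w_pos j).le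

theorem xF_le_fst (hBL : I.IsBL pos) (hord : d.IsOrdered) {i : Fin n} (hi : i ∉ d.F) {t : ℝ}
    (ht : (pos i).2 < t) : d.xF t ≤ (pos i).1 :=
  hBL.feasible.sum_le_fst (hord.isLowerSet_tall t)
    (fun _ hj => hBL.pos_eq_of_mem_F hord (Finset.mem_filter.1 hj).1)
    (fun h => hi (Finset.mem_filter.1 h).1) fun _ hj => ht.trans (Finset.mem_filter.1 hj).2

theorem fst_add_w_le_xF (hBL : I.IsBL pos) (hord : d.IsOrdered) {i : Fin n} (hi : i ∈ d.F)
    {t : ℝ} (ht : t < (I.r i).h) : (pos i).1 + (I.r i).w ≤ d.xF t := by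
  rw [hBL.pos_eq_of_mem_F hord hi, Finset.sum_Iio_add_eq_sum_Iic]
  exact Finset.sum_le_sum_of_subset_of_nonneg
    (fun j hj => hord.isLowerSet_tall t (Finset.mem_Iic.1 hj) (Finset.mem_filter.2 ⟨hi, ht⟩))
    fun j _ _ => (I.w_pos j).le

theorem zero_lt_of_mem_typeOf (hBL : I.IsBL pos) {t : ℝ} {i : Fin n}
    (hi : i ∈ TypeOf I d pos t) : 0 < t :=
  (hBL.feasible.1 i).2.2.trans_lt (Finset.mem_filter.1 hi).2.2.1.1

theorem xF_add_sum_typeOf_le_volume_occupied (hBL : I.IsBL pos) (hord : d.IsOrdered) {t : ℝ}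
    (ht : 0 < t) :
    d.xF t + ∑ i ∈ TypeOf I d pos t, (I.r i).w ≤ (volume (I.occupied pos t)).toReal := by
  have htype : ∀ i ∈ TypeOf I d pos t, i ∈ d.Q ∧ I.Intersects pos i t := fun i hi =>
    ⟨(Finset.mem_filter.1 hi).2.1, (Finset.mem_filter.1 hi).2.2.1⟩
  have hdisj : Disjoint (d.tall t) (TypeOf I d pos t) := Finset.disjoint_left.2 fun i hi hi' =>
    FQW.notMem_F_of_mem_Q (htype i hi').1 (Finset.mem_filter.1 hi).1
  rw [FQW.xF, ← Finset.sum_union hdisj]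
  refine hBL.feasible.sum_le_volume_occupied fun i hi => ?_
  rcases Finset.mem_union.1 hi with hi | hi
  · obtain ⟨hiF, hit⟩ := Finset.mem_filter.1 hi
    simpa [SPInstance.Intersects, hBL.pos_eq_of_mem_F hord hiF] using And.intro ht hit
  · exact (htype i hi).2

theorem half_le_occFrac (hBL : I.IsBL pos) (hord : d.IsOrdered) {t : ℝ} (ht : 0 < t)
    (hW : I.W ≤ d.xF t + 2 * ∑ i ∈ TypeOf I d pos t, (I.r i).w) :
    1 / 2 ≤ I.occFrac pos t := by
  rw [SPInstance.occFrac, le_div_iff₀ I.W_pos]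
  linarith [hBL.xF_add_sum_typeOf_le_volume_occupied hord ht, d.xF_nonneg t]

end SPInstance.IsBL

theorem IsLeftRect.mem_Q {iT iL : Fin n} (hiL : IsLeftRect I d pos iT iL) (hiT : iT ∈ d.Q) :
    iL ∈ d.Q := by
  rcases hiL with h | h
  · exact h.1
  · exact h.2 ▸ hiT

theorem IsLeftRect.fst_ne_zero {iT iL i : Fin n} (hiL : IsLeftRect I d pos iT iL)
    (hi : i ∈ d.Q) (hlt : i < iL) : (pos i).1 ≠ 0 := by
  rcases hiL with h | h
  · exact fun h0 => (h.2.2 i hi h0).not_gt hlt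
  · exact h.1 i hi

/-- `r_m` is the first rectangle of the ordering placed above the line at height `t`, and belongs
to `Q`. The earlier rectangles start strictly below the line, as they do when it is proper. -/
structure IsFirstAbove (d : FQW I) (pos : Fin n → ℝ × ℝ) (t : ℝ) (m : Fin n) : Prop where
  mem_Q : m ∈ d.Q
  lt_snd : t < (pos m).2
  snd_lt : ∀ j < m, (pos j).2 < t

theorem InLk.exists_isFirstAbove {iL : Fin n} {k : ℕ} {t : ℝ} (ht : InLk I d pos iL k t)
    (hord : d.IsOrdered) (hiL : iL ∈ d.Q) : ∃ m ≤ iL, IsFirstAbove d pos t m := by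
  obtain ⟨hproper, ⟨m, hFm, hmL, hmax, hlt⟩, -⟩ := ht
  have hmQ : m ∈ d.Q := by
    have hiL' := (hord.2.1 iL).1 hiL
    exact (hord.2.1 m).2 (by lia)
  refine ⟨m, hmL, hmQ, hlt, fun j hj => lt_of_le_of_ne ?_ (hproper j).1.symm⟩
  exact (le_ciSup (f := fun j : {j : Fin n // (j : ℕ) < m} => (pos j).2)
    (Set.finite_range _).bddAbove ⟨j, hj⟩).trans hmax

namespace IsFirstAbove

variable {t : ℝ} {m q : Fin n}

theorem mem_typeOf_iff (hm : IsFirstAbove d pos t m) {i : Fin n} :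
    i ∈ TypeOf I d pos t ↔ i ∈ d.Q ∧ I.Intersects pos i t ∧ i < m := by
  simp only [TypeOf, Finset.mem_filter, Finset.mem_univ, true_and]
  refine and_congr_right fun _ => and_congr_right fun _ => ⟨fun h => ?_, fun him j hj => ?_⟩
  · by_contra! hmi
    exact (h m hmi).not_gt hm.lt_snd
  · exact (hm.snd_lt j (hj.trans_lt him)).le

theorem w_le_of_mem_typeOf (hm : IsFirstAbove d pos t m) (hord : d.IsOrdered) {i : Fin n}
    (hi : i ∈ TypeOf I d pos t) : (I.r m).w ≤ (I.r i).w :=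
  have ⟨hiQ, _, him⟩ := hm.mem_typeOf_iff.1 hi
  hord.w_le_of_le hiQ hm.mem_Q him.le

theorem exists_mem_typeOf_of_xF_le (hm : IsFirstAbove d pos t m) (hord : d.IsOrdered)
    (hBL : I.IsBL pos) (ht : 0 ≤ t) {u : ℝ} (hu : d.xF t ≤ u) (huW : u + (I.r m).w ≤ I.W) :
    ∃ j ∈ TypeOf I d pos t, (pos j).1 < u + (I.r m).w ∧ u < (pos j).1 + (I.r j).w := by
  have hinfeas : ¬ I.FeasibleAt pos m (u, t) := fun h =>
    ((hBL m).2 _ h).elim hm.lt_snd.not_gt fun h => hm.lt_snd.ne' h.1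
  rw [SPInstance.feasibleAt_iff, not_and] at hinfeas
  have hblocked := hinfeas ⟨(d.xF_nonneg t).trans hu, huW, ht⟩
  push Not at hblocked
  obtain ⟨j, hjm, hju, huj, -, htj⟩ := hblocked
  rcases hord.mem_F_or_mem_Q_of_lt hm.mem_Q hjm with hjF | hjQ
  · have hjt : t < (I.r j).h := by simpa [hBL.pos_eq_of_mem_F hord hjF] using htj
    exact absurd (hBL.fst_add_w_le_xF hord hjF hjt) (hu.trans_lt huj).not_ge
  · exact ⟨j, hm.mem_typeOf_iff.2 ⟨hjQ, ⟨hm.snd_lt j hjm, htj⟩, hjm⟩, hju, huj⟩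

theorem fst_lt_xF_add_w (hm : IsFirstAbove d pos t m) (hord : d.IsOrdered) (hBL : I.IsBL pos)
    (hq : IsLM I d pos t q) : (pos q).1 < d.xF t + (I.r m).w := by
  by_contra! hle
  have hfits : d.xF t + (I.r m).w ≤ I.W := by linarith [(hBL.feasible.1 q).2.1, I.w_pos q]
  obtain ⟨j, hj, hlt, -⟩ := hm.exists_mem_typeOf_of_xF_le hord hBL
    (hBL.zero_lt_of_mem_typeOf hq.1).le le_rfl hfits
  exact (hle.trans (hq.2 j hj)).not_gt hlt

theorem fst_le_xF_snd (hm : IsFirstAbove d pos t m) (hord : d.IsOrdered) (hBL : I.IsBL pos)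
    (hq : IsLM I d pos t q) (hq0 : (pos q).1 ≠ 0) : (pos q).1 ≤ d.xF (pos q).2 := by
  obtain ⟨j, hjq, hjx, -, hqj⟩ := hBL.exists_isLeftSupporter hq0
  have hjm : j < m := hjq.trans (hm.mem_typeOf_iff.1 hq.1).2.2
  rcases hord.mem_F_or_mem_Q_of_lt hm.mem_Q hjm with hjF | hjQ
  · rw [← hjx]
    exact hBL.fst_add_w_le_xF hord hjF (by simpa [hBL.pos_eq_of_mem_F hord hjF] using hqj)
  · have hxj : d.xF t ≤ (pos j).1 :=
      hBL.xF_le_fst hord (FQW.notMem_F_of_mem_Q hjQ) (hm.snd_lt j hjm)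
    have hwj : (I.r m).w ≤ (I.r j).w := hord.w_le_of_le hjQ hm.mem_Q hjm.le
    linarith [hm.fst_lt_xF_add_w hord hBL hq]

theorem W_le_fst_add_two_mul_sum_typeOf (hm : IsFirstAbove d pos t m) (hord : d.IsOrdered)
    (hBL : I.IsBL pos) (hq : IsLM I d pos t q) :
    I.W ≤ (pos q).1 + 2 * ∑ i ∈ TypeOf I d pos t, (I.r i).w := by
  obtain ⟨hqQ, hqt, -⟩ := hm.mem_typeOf_iff.1 hq.1
  have hxq : d.xF t ≤ (pos q).1 := hBL.xF_le_fst hord (FQW.notMem_F_of_mem_Q hqQ) hqt.1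
  -- A window of width `w_m` starting at `u` meets `r_j` exactly for `x_j - w_m < u < x_j + w_j`,
  -- and this range of `u` has length `w_j + w_m ≤ 2 w_j`.
  have hcover : Set.Ioc ((pos q).1 - (I.r m).w) (I.W - (I.r m).w) ⊆
      ⋃ j ∈ TypeOf I d pos t, Set.Ioo ((pos j).1 - (I.r m).w) ((pos j).1 + (I.r j).w) := by
    rintro u ⟨hqu, huW⟩
    rw [Set.mem_iUnion₂]
    rcases lt_or_ge u (pos q).1 with huq | hqu'
    · exact ⟨q, hq.1, hqu, by linarith [I.w_pos q]⟩
    · obtain ⟨j, hj, hju, huj⟩ := hm.exists_mem_typeOf_of_xF_le hord hBL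
        (hBL.zero_lt_of_mem_typeOf hq.1).le (hxq.trans hqu') (by linarith)
      exact ⟨j, hj, by linarith, huj⟩
  have hlen := sub_le_sum_of_Ioc_subset_biUnion_Ioo
    (fun j _ => by linarith [I.w_pos j, I.w_pos m]) hcover
  have htwice : ∑ j ∈ TypeOf I d pos t, ((pos j).1 + (I.r j).w - ((pos j).1 - (I.r m).w)) ≤
      ∑ j ∈ TypeOf I d pos t, 2 * (I.r j).w :=
    Finset.sum_le_sum fun j hj => by linarith [hm.w_le_of_mem_typeOf hord hj]
  rw [← Finset.mul_sum] at htwice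
  linarith

theorem le_of_fst_lt_or_snd_le (hm : IsFirstAbove d pos t m) (hord : d.IsOrdered)
    (hBL : I.IsBL pos) (hq : IsLM I d pos t q) (hq0 : (pos q).1 ≠ 0) {p : Fin n} (hp : p ∈ d.Q)
    (hne : q ≠ p)
    (hpq : (pos p).1 < (pos q).1 ∨ (pos p).1 = (pos q).1 ∧ (pos q).2 ≤ (pos p).2) : m ≤ p := by
  by_contra! hpm
  have hpF : p ∉ d.F := FQW.notMem_F_of_mem_Q hp
  have hqt : t < (pos q).2 + (I.r q).h := (hm.mem_typeOf_iff.1 hq.1).2.1.2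
  have hxp : d.xF t ≤ (pos p).1 := hBL.xF_le_fst hord hpF (hm.snd_lt p hpm)
  have hwp : (I.r m).w ≤ (I.r p).w := hord.w_le_of_le hp hm.mem_Q hpm.le
  have hxle : (pos p).1 ≤ (pos q).1 := hpq.elim le_of_lt fun h => h.1.le
  have hxlt : (pos q).1 < (pos p).1 + (I.r p).w := by
    linarith [hm.fst_lt_xF_add_w hord hBL hq]
  have hstack : (pos p).2 + (I.r p).h ≤ (pos q).2 := by
    rcases hBL.feasible.separated hne with h | h | h | h
    · linarith [I.w_pos q]
    · linarith
    · linarith [hm.snd_lt p hpm]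
    · exact h
  have hylt : (pos p).2 < (pos q).2 := by linarith [I.h_pos p]
  have hxge : (pos q).1 ≤ (pos p).1 :=
    (hm.fst_le_xF_snd hord hBL hq hq0).trans (hBL.xF_le_fst hord hpF hylt)
  exact hpq.elim hxge.not_gt fun h => h.2.not_gt hylt

variable {t' : ℝ} {m' p : Fin n}

theorem lt_of_le_of_mem_typeOf (hm : IsFirstAbove d pos t m) (hm' : IsFirstAbove d pos t' m')
    (hp : p ∈ TypeOf I d pos t') (hmp : m ≤ p) : t < t' :=
  hm.lt_snd.trans (hm'.snd_lt m (hmp.trans_lt (hm'.mem_typeOf_iff.1 hp).2.2))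

theorem w_add_sum_typeOf_le (hm : IsFirstAbove d pos t m) (hm' : IsFirstAbove d pos t' m')
    (hord : d.IsOrdered) (hcard : (TypeOf I d pos t).card = (TypeOf I d pos t').card)
    (hp : p ∈ TypeOf I d pos t') (hmp : m ≤ p) :
    (I.r m).w + ∑ i ∈ TypeOf I d pos t', (I.r i).w ≤
      ∑ i ∈ TypeOf I d pos t, (I.r i).w + (I.r p).w := by
  refine add_sum_le_sum_add_of_card_eq hcard (fun i hi _ => hm.w_le_of_mem_typeOf hord hi)
    (fun i hi' hi => ?_) hp fun h => (hm.mem_typeOf_iff.1 h).2.2.not_ge hmp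
  obtain ⟨hiQ, hit', -⟩ := hm'.mem_typeOf_iff.1 hi'
  have hmi : m ≤ i := by
    by_contra! him
    exact hi (hm.mem_typeOf_iff.2 ⟨hiQ,
      ⟨hm.snd_lt i him, (hm.lt_of_le_of_mem_typeOf hm' hp hmp).trans hit'.2⟩, him⟩)
  exact hord.w_le_of_le hm.mem_Q hiQ hmi

theorem W_le_xF_add_two_mul_sum_typeOf (hm : IsFirstAbove d pos t m)
    (hm' : IsFirstAbove d pos t' m') (hord : d.IsOrdered) (hBL : I.IsBL pos)
    (hcard : (TypeOf I d pos t).card = (TypeOf I d pos t').card) (hq : IsLM I d pos t q)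
    (hp : IsLM I d pos t' p) (hp0 : (pos p).1 ≠ 0) (hne : q ≠ p)
    (hpq : (pos p).1 ≤ (pos q).1) (hmp : m ≤ p) :
    I.W ≤ d.xF t + 2 * ∑ i ∈ TypeOf I d pos t, (I.r i).w := by
  obtain ⟨hpQ, hpt', -⟩ := hm'.mem_typeOf_iff.1 hp.1
  have hW := hm'.W_le_fst_add_two_mul_sum_typeOf hord hBL hp
  have hsum := hm.w_add_sum_typeOf_le hm' hord hcard hp.1 hmp
  have hwp : (I.r p).w ≤ (I.r m).w := hord.w_le_of_le hm.mem_Q hpQ hmp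
  rcases le_or_gt t (pos p).2 with htp | hpt
  · have hxp : (pos p).1 ≤ d.xF t :=
      (hm'.fst_le_xF_snd hord hBL hp hp0).trans (d.xF_antitone htp)
    linarith
  · have htt' : t < t' := hm.lt_of_le_of_mem_typeOf hm' hp.1 hmp
    have hqt : I.Intersects pos q t := (hm.mem_typeOf_iff.1 hq.1).2.1
    have hleft : (pos p).1 + (I.r p).w ≤ (pos q).1 := by
      rcases hBL.feasible.separated hne with h | h | h | h
      · linarith [I.w_pos q]
      · exact h
      · linarith [hqt.2]
      · linarith [hqt.1, hpt'.2]
    linarith [hm.fst_lt_xF_add_w hord hBL hq]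

end IsFirstAbove

end Line

/-- **Lemma.** For every line `ℓ ∈ L^k`, either `LM(ℓ) = LM^k` or `ℓ` is at
least half occupied. -/
theorem half_occupied_or_LMk {n : ℕ} (I : SPInstance n) (d : FQW I)
    (hord : d.IsOrdered) (pos : Fin n → ℝ × ℝ) (hBL : I.IsBL pos)
    (hQ : d.Q.Nonempty) (iT iL : Fin n) (hiT : IsTopRect I d pos iT)
    (hiL : IsLeftRect I d pos iT iL)
    (k : ℕ) (hk : 1 ≤ k) (t : ℝ) (ht : InLk I d pos iL k t)
    (iLM : Fin n) (hLM : IsLM I d pos t iLM)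
    (iLMk : Fin n) (hLMk : IsLMk I d pos iL k iLMk) :
    iLM = iLMk ∨ 1 / 2 ≤ I.occFrac pos t := by
  refine or_iff_not_imp_left.2 fun hne => ?_
  obtain ⟨⟨t', ht', hLM'⟩, hmin⟩ := hLMk
  have hlex := hmin iLM ⟨t, ht, hLM⟩
  have hLQ : iL ∈ d.Q := hiL.mem_Q hiT.1
  obtain ⟨m, hmL, hm⟩ := ht.exists_isFirstAbove hord hLQ
  obtain ⟨m', hmL', hm'⟩ := ht'.exists_isFirstAbove hord hLQ
  obtain ⟨hqQ, -, hqm⟩ := hm.mem_typeOf_iff.1 hLM.1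
  obtain ⟨hpQ, -, hpm'⟩ := hm'.mem_typeOf_iff.1 hLM'.1
  have hq0 : (pos iLM).1 ≠ 0 := hiL.fst_ne_zero hqQ (hqm.trans_le hmL)
  have hp0 : (pos iLMk).1 ≠ 0 := hiL.fst_ne_zero hpQ (hpm'.trans_le hmL')
  have hmp : m ≤ iLMk := hm.le_of_fst_lt_or_snd_le hord hBL hLM hq0 hpQ hne hlex
  exact hBL.half_le_occFrac hord (hBL.zero_lt_of_mem_typeOf hLM.1) <|
    hm.W_le_xF_add_two_mul_sum_typeOf hm' hord hBL (ht.2.2.trans ht'.2.2.symm) hLM hLM' hp0 hne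
      (hlex.elim le_of_lt fun h => h.1.le) hmp
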